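/- Let F be a field of characteristic p > 0 that is finitely generated as a field over 𝔽_p, and let r ≥ 2. Call a subset Δ ⊆ SL_r(F) Zariski dense in SL_r if every polynomial f ∈ F[X₁₁,…,X_rr] in the r² matrix entries that vanishes at every element of Δ vanishes at every element of SL_r(F̄), where F̄ is an algebraic closure of F. If Δ ⊆ SL_r(F) is Zariski dense in SL_r, then there exists δ ∈ Δ such that tr(δ)·tr(δ⁻¹) is transcendental over 𝔽_p; in particular δ has infinite order (δⁿ ≠ 1 for all n ≥ 1). -/

import Mathlib

/-!
The function `g ↦ tr g * tr g⁻¹` is polynomial on `SL_n`. Only finitely many elements of a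
finitely generated field of characteristic `p` are algebraic over `𝔽_p`, so if the function took
only algebraic values on a Zariski dense set, it would take only finitely many values there, hence
on all of `SL_n`. But on products of two opposite transvections it already attains every square.
An element of finite order has roots of unity as eigenvalues, so its traces are algebraic.
-/

section AlgebraicElements

open MvPolynomial

theorem linearDisjoint_adjoin_range_of_algebraicIndependent {R S ι : Type*} [CommRing R]
    [CommRing S] [Algebra R S] [FaithfulSMul R S] {A : Subalgebra R S} {x : ι → S}
    (hx : AlgebraicIndependent A x) :
    A.LinearDisjoint (Algebra.adjoin R (Set.range x)) := by
  have hxR : AlgebraicIndependent R x :=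
    hx.restrictScalars <| .of_comp (f := A.val) (FaithfulSMul.algebraMap_injective R S)
  let monomials := (basisMonomials ι R).map hxR.aevalEquiv.toLinearEquiv
  refine .of_basis_right _ _ monomials ?_
  have hmonomials : LinearIndependent A (aeval x ∘ basisMonomials ι A) :=
    (basisMonomials ι A).linearIndependent.map' (aeval x).toLinearMap
      (LinearMap.ker_eq_bot.mpr hx)
  convert hmonomials using 1
  ext d
  simp [monomials, aeval_monomial]

open IntermediateField.algebraAdjoinAdjoin in
theorem finite_of_algebraicIndependent_of_finite_adjoin {k F ι : Type*} [Field k] [Field F]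
    [Algebra k F] {K : IntermediateField k F} {x : ι → F} (hx : AlgebraicIndependent K x)
    [Module.Finite (IntermediateField.adjoin k (Set.range x)) F] : Module.Finite k K := by
  let b := Module.Free.chooseBasis k K
  have hli : LinearIndependent (Algebra.adjoin k (Set.range x)) (K.val ∘ b) :=
    (linearDisjoint_adjoin_range_of_algebraicIndependent
      (A := K.toSubalgebra) hx).linearIndependent_left_of_flat b.linearIndependent
  rw [LinearIndependent.iff_fractionRing _ (IntermediateField.adjoin k (Set.range x))] at hli
  have := hli.finite
  exact Module.Finite.of_basis b

theorem finite_algebraicClosure_of_essFiniteType (k F : Type*) [Field k] [Field F] [Algebra k F]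
    [Algebra.EssFiniteType k F] : Module.Finite k (algebraicClosure k F) := by
  obtain ⟨ι, x, hx⟩ := exists_isTranscendenceBasis' k F
  have := hx.isAlgebraic_field
  have := Algebra.EssFiniteType.of_comp k (IntermediateField.adjoin k (Set.range x)) F
  have := Algebra.finite_of_essFiniteType_of_isAlgebraic
    (F := IntermediateField.adjoin k (Set.range x)) (E := F)
  exact finite_of_algebraicIndependent_of_finite_adjoin hx.1.algebraicClosure

theorem finite_setOf_isAlgebraic (k F : Type*) [Field k] [Finite k] [Field F] [Algebra k F]
    [Algebra.EssFiniteType k F] : {x : F | IsAlgebraic k x}.Finite := by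
  have := finite_algebraicClosure_of_essFiniteType k F
  have := Module.finite_of_finite k (M := algebraicClosure k F)
  exact (Set.toFinite (algebraicClosure k F : Set F)).subset fun _ ↦ mem_algebraicClosure_iff.mpr

theorem finite_bot_subfield_of_charP (F : Type*) [Field F] (p : ℕ) [Fact p.Prime]
    [CharP F p] : Finite (⊥ : Subfield F) := by
  let := ZMod.algebra F p
  rw [Subfield.bot_eq_of_zMod_algebra p]
  exact Set.finite_range (algebraMap (ZMod p) F)

end AlgebraicElements

section Trace

open Matrix

variable {n : Type*} [Fintype n] [DecidableEq n]

theorem isIntegral_trace_of_isIntegral_of_isAlgClosed {R L : Type*} [CommRing R] [Field L]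
    [IsAlgClosed L] [Algebra R L] {M : Matrix n n L} (hM : IsIntegral R M) :
    IsIntegral R M.trace := by
  cases isEmpty_or_nonempty n
  · simpa [trace] using isIntegral_zero
  obtain ⟨P, hmonic, hP⟩ := hM
  rw [trace_eq_sum_roots_charpoly]
  refine IsIntegral.multiset_sum fun μ hμ ↦ ⟨P, hmonic, ?_⟩
  have hspec : μ ∈ spectrum L M :=
    mem_spectrum_of_isRoot_charpoly (Polynomial.isRoot_of_mem_roots hμ)
  have hmem := spectrum.subset_polynomial_aeval M (P.map (algebraMap R L))
    (Set.mem_image_of_mem _ hspec)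
  rw [Polynomial.aeval_map_algebraMap, Polynomial.aeval_def, hP, spectrum.zero_eq,
    Set.mem_singleton_iff, Polynomial.eval_map] at hmem
  exact hmem

theorem isIntegral_trace_of_isIntegral {R F : Type*} [CommRing R] [Field F] [Algebra R F]
    {M : Matrix n n F} (hM : IsIntegral R M) : IsIntegral R M.trace := by
  let toClosure := IsScalarTower.toAlgHom R F (AlgebraicClosure F)
  have hclosure := isIntegral_trace_of_isIntegral_of_isAlgClosed (hM.map toClosure.mapMatrix)
  rw [AlgHom.mapMatrix_apply, ← AddMonoidHom.map_trace] at hclosure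
  exact (isIntegral_algHom_iff toClosure toClosure.toRingHom.injective).mp hclosure

end Trace

section AdjointTrace

open MvPolynomial
open Matrix hiding mul_inv_rev transvection
open Matrix.SpecialLinearGroup (transvection)

variable {n : Type*} [Fintype n] [DecidableEq n]

/-- The trace of the conjugation action of `g` on the space of `n × n` matrices. -/
def adjointTrace {R : Type*} [CommRing R] (g : Matrix.SpecialLinearGroup n R) : R :=
  trace (g : Matrix n n R) * trace ((g⁻¹ : Matrix.SpecialLinearGroup n R) : Matrix n n R)

variable (n) in
/-- The polynomial in the matrix entries that represents `adjointTrace` on `SL_n`: the inverse is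
replaced by the adjugate, which agrees with it in determinant one. -/
noncomputable def adjointTracePolynomial (R : Type*) [CommRing R] : MvPolynomial (n × n) R :=
  (mvPolynomialX n n R).trace * (mvPolynomialX n n R).adjugate.trace

theorem map_adjointTracePolynomial {R S : Type*} [CommRing R] [CommRing S] (φ : R →+* S) :
    map φ (adjointTracePolynomial n R) = adjointTracePolynomial n S := by
  have hX : (map φ).mapMatrix (mvPolynomialX n n R) = mvPolynomialX n n S := by
    ext1 i j
    simp
  simp only [adjointTracePolynomial, map_mul, AddMonoidHom.map_trace, ← RingHom.mapMatrix_apply,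
    RingHom.map_adjugate, hX]

theorem eval_adjointTracePolynomial {R : Type*} [CommRing R] (g : Matrix.SpecialLinearGroup n R) :
    eval (fun ij ↦ (g : Matrix n n R) ij.1 ij.2) (adjointTracePolynomial n R) =
      adjointTrace g := by
  rw [adjointTracePolynomial, map_mul, AddMonoidHom.map_trace, AddMonoidHom.map_trace,
    ← RingHom.mapMatrix_apply, ← RingHom.mapMatrix_apply, RingHom.map_adjugate,
    mvPolynomialX_mapMatrix_eval, adjointTrace, Matrix.SpecialLinearGroup.coe_inv]

theorem trace_transvection_mul_transvection {R : Type*} [CommRing R] {i j : n} (hij : i ≠ j)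
    (a b : R) :
    trace ((transvection hij a * transvection hij.symm b : Matrix.SpecialLinearGroup n R) :
      Matrix n n R) = Fintype.card n + a * b := by
  simp [Matrix.SpecialLinearGroup.transvection_coe, mul_add, add_mul, trace_single_eq_of_ne, hij,
    hij.symm]

theorem inv_transvection {R : Type*} [CommRing R] {i j : n} (hij : i ≠ j) (a : R) :
    (transvection hij a)⁻¹ = transvection hij (-a) := by
  refine inv_eq_of_mul_eq_one_right (Subtype.ext ?_)
  rw [Matrix.SpecialLinearGroup.coe_mul, Matrix.SpecialLinearGroup.coe_one]
  exact (transvection_mul_transvection_same i j hij a (-a)).trans (by simp)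

theorem adjointTrace_transvection_mul_transvection {R : Type*} [CommRing R] {i j : n}
    (hij : i ≠ j) (a b : R) :
    adjointTrace (transvection hij a * transvection hij.symm b) =
      (Fintype.card n + a * b) ^ 2 := by
  rw [adjointTrace, mul_inv_rev, inv_transvection, inv_transvection,
    trace_transvection_mul_transvection, trace_transvection_mul_transvection hij.symm]
  ring

theorem infinite_range_pow {R : Type*} [CommRing R] [IsDomain R] [Infinite R] {m : ℕ}
    (hm : 0 < m) : (Set.range fun t : R ↦ t ^ m).Infinite := by
  classical
  intro hfin
  refine Set.infinite_univ ((hfin.preimage' fun b _ ↦ ?_).subset fun t _ ↦ Set.mem_range_self t)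
  exact (Polynomial.nthRoots m b).toFinset.finite_toSet.subset fun t ht ↦ by
    simpa [Polynomial.mem_nthRoots hm] using ht

theorem infinite_range_adjointTrace {R : Type*} [CommRing R] [IsDomain R] [Infinite R]
    [Nontrivial n] :
    (Set.range (adjointTrace : Matrix.SpecialLinearGroup n R → R)).Infinite := by
  obtain ⟨i, j, hij⟩ := exists_pair_ne n
  refine (infinite_range_pow two_pos).mono ?_
  rintro _ ⟨t, rfl⟩
  exact ⟨_, (adjointTrace_transvection_mul_transvection hij (t - Fintype.card n) 1).trans
    (by ring)⟩

theorem isIntegral_trace_of_isOfFinOrder (R : Type*) {F : Type*} [CommRing R] [Field F]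
    [Algebra R F] {g : Matrix.SpecialLinearGroup n F} (hg : IsOfFinOrder g) :
    IsIntegral R (g : Matrix n n F).trace := by
  obtain ⟨m, hm, hpow⟩ := isOfFinOrder_iff_pow_eq_one.mp hg
  refine isIntegral_trace_of_isIntegral (IsIntegral.of_pow (x := (g : Matrix n n F)) hm ?_)
  rw [← Matrix.SpecialLinearGroup.coe_pow, hpow, Matrix.SpecialLinearGroup.coe_one]
  exact isIntegral_one

theorem isAlgebraic_adjointTrace_of_isOfFinOrder (k : Type*) {F : Type*} [CommRing k] [Field F]
    [Algebra k F] {g : Matrix.SpecialLinearGroup n F} (hg : IsOfFinOrder g) :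
    IsAlgebraic k (adjointTrace g) := by
  have := (algebraMap k F).domain_nontrivial
  exact ((isIntegral_trace_of_isOfFinOrder k hg).mul
    (isIntegral_trace_of_isOfFinOrder k hg.inv)).isAlgebraic

end AdjointTrace

section ZariskiDense

open Matrix MvPolynomial

variable {n : Type*} [Fintype n] [DecidableEq n]

/-- `Δ ⊆ SL_n(R)` is Zariski dense in `SL_n` as seen by its `S`-points: every polynomial in the
matrix entries with coefficients in `R` that vanishes on `Δ` vanishes on `SL_n(S)`. When `R` is a
field and `S` its algebraic closure, this is Zariski density in `SL_n`. -/
def IsZariskiDense {R : Type*} (S : Type*) [CommRing R] [CommRing S] [Algebra R S]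
    (Δ : Set (Matrix.SpecialLinearGroup n R)) : Prop :=
  ∀ f : MvPolynomial (n × n) R,
    (∀ δ ∈ Δ, eval (fun ij ↦ (δ : Matrix n n R) ij.1 ij.2) f = 0) →
      ∀ g : Matrix.SpecialLinearGroup n S,
        eval (fun ij ↦ (g : Matrix n n S) ij.1 ij.2) (map (algebraMap R S) f) = 0

theorem IsZariskiDense.eval_map_mem_image {R S : Type*} [CommRing R] [CommRing S] [IsDomain S]
    [Algebra R S] {Δ : Set (Matrix.SpecialLinearGroup n R)} (hΔ : IsZariskiDense S Δ)
    {f : MvPolynomial (n × n) R} {V : Set R} (hV : V.Finite)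
    (hf : ∀ δ ∈ Δ, eval (fun ij ↦ (δ : Matrix n n R) ij.1 ij.2) f ∈ V)
    (g : Matrix.SpecialLinearGroup n S) :
    eval (fun ij ↦ (g : Matrix n n S) ij.1 ij.2) (map (algebraMap R S) f) ∈
      algebraMap R S '' V := by
  have hzero := hΔ (∏ c ∈ hV.toFinset, (f - C c)) (fun δ hδ ↦ ?_) g
  · simp only [map_prod, map_sub, map_C, eval_C, Finset.prod_eq_zero_iff, sub_eq_zero] at hzero
    obtain ⟨c, hc, hgc⟩ := hzero
    exact ⟨c, hV.mem_toFinset.mp hc, hgc.symm⟩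
  · rw [map_prod]
    exact Finset.prod_eq_zero (hV.mem_toFinset.mpr (hf δ hδ)) (by simp)

theorem IsZariskiDense.exists_adjointTrace_notMem {R S : Type*} [CommRing R] [CommRing S]
    [IsDomain S] [Infinite S] [Algebra R S] [Nontrivial n]
    {Δ : Set (Matrix.SpecialLinearGroup n R)} (hΔ : IsZariskiDense S Δ) {V : Set R}
    (hV : V.Finite) : ∃ δ ∈ Δ, adjointTrace δ ∉ V := by
  by_contra! hmem
  refine infinite_range_adjointTrace (n := n) (R := S) ((hV.image (algebraMap R S)).subset ?_)
  rintro _ ⟨g, rfl⟩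
  rw [← eval_adjointTracePolynomial, ← map_adjointTracePolynomial (algebraMap R S)]
  exact hΔ.eval_map_mem_image hV (fun δ hδ ↦ eval_adjointTracePolynomial δ ▸ hmem δ hδ) g

theorem exists_transcendental_adjoint_trace_of_zariski_dense_general {k F L : Type*} [CommRing k]
    [Field F] [CommRing L] [IsDomain L] [Infinite L] [Algebra k F] [Algebra F L] [Nontrivial n]
    (hfin : {x : F | IsAlgebraic k x}.Finite) {Δ : Set (Matrix.SpecialLinearGroup n F)}
    (hΔ : IsZariskiDense L Δ) :
    ∃ δ ∈ Δ, Transcendental k (adjointTrace δ) ∧ ¬IsOfFinOrder δ := by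
  obtain ⟨δ, hδ, htrans⟩ := hΔ.exists_adjointTrace_notMem hfin
  exact ⟨δ, hδ, htrans, fun hord ↦ htrans (isAlgebraic_adjointTrace_of_isOfFinOrder k hord)⟩

end ZariskiDense

/-- Let `F` be a field of characteristic `p > 0` which is finitely generated as a field
over its prime field `𝔽_p` (realized as `⊥ : Subfield F`), and let `r ≥ 2`.  If
`Δ ⊆ SL_r(F)` is Zariski dense in `SL_r` (every polynomial in the matrix entries
vanishing on `Δ` vanishes on `SL_r(F̄)`), then some `δ ∈ Δ` has `tr(δ)·tr(δ⁻¹)`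
transcendental over `𝔽_p`; in particular `δ` has infinite order. -/
theorem exists_transcendental_adjoint_trace_of_zariski_dense
    (F Fbar : Type*) [Field F] [Field Fbar] [Algebra F Fbar] [IsAlgClosure F Fbar]
    (p : ℕ) [Fact p.Prime] [CharP F p]
    (hfg : ∃ s : Finset F, Subfield.closure (s : Set F) = ⊤)
    (r : ℕ) (hr : 2 ≤ r)
    (Δ : Set (Matrix.SpecialLinearGroup (Fin r) F))
    (hdense : ∀ f : MvPolynomial (Fin r × Fin r) F,
      (∀ δ ∈ Δ, MvPolynomial.eval
          (fun ij => (δ : Matrix (Fin r) (Fin r) F) ij.1 ij.2) f = 0) →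
      ∀ g : Matrix.SpecialLinearGroup (Fin r) Fbar,
        MvPolynomial.eval (fun ij => (g : Matrix (Fin r) (Fin r) Fbar) ij.1 ij.2)
          (MvPolynomial.map (algebraMap F Fbar) f) = 0) :
    ∃ δ ∈ Δ,
      Transcendental (⊥ : Subfield F)
        (Matrix.trace ((δ : Matrix (Fin r) (Fin r) F)) *
          Matrix.trace ((δ⁻¹ : Matrix.SpecialLinearGroup (Fin r) F) :
            Matrix (Fin r) (Fin r) F)) ∧
      ∀ n : ℕ, 1 ≤ n → δ ^ n ≠ 1 := by
  have := Field.fg_iff_essFiniteType.mp ⟨hfg⟩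
  have := finite_bot_subfield_of_charP F p
  have : IsAlgClosed Fbar := IsAlgClosure.isAlgClosed F
  have : Infinite Fbar := IsAlgClosed.instInfinite
  have : Nontrivial (Fin r) := Fin.nontrivial_iff_two_le.mpr hr
  obtain ⟨δ, hδ, htrans, hord⟩ := exists_transcendental_adjoint_trace_of_zariski_dense_general
    (finite_setOf_isAlgebraic (⊥ : Subfield F) F) hdense
  exact ⟨δ, hδ, htrans, fun m hm hpow ↦ hord (isOfFinOrder_iff_pow_eq_one.mpr ⟨m, hm, hpow⟩)⟩
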